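/- Let F be a field of characteristic p (possibly 0), let f ∈ F[t][x] be a square-free polynomial, and let c ∈ F[t]. Let Ψ : F[t][x] → F[t][x] be the unique F[t]-algebra automorphism with Ψ(x) = x + c, so Ψ(f)(t,x) = f(t, x + c(t)). If p = 0 or p > deg_x(f)·deg(c) + deg_t(f), then Ψ(f) is separable in t. -/

import Mathlib

/-- `g ∈ F[t][x]` (outer variable `x`, inner variable `t`) is separable in `t`: viewed as a
univariate polynomial in `t` with coefficients in the rational function field `F(x)`, it is
separable. -/
noncomputable def sepT {F : Type*} [Field F] (g : Polynomial (Polynomial F)) : Prop :=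
  Polynomial.Separable
    (Polynomial.eval₂ (Polynomial.mapRingHom (algebraMap F (RatFunc F)))
      (Polynomial.C RatFunc.X) g)

/-- The degree in `t` of `f ∈ F[t][x]` (outer variable `x`, inner variable `t`). -/
noncomputable def degTP {F : Type*} [CommRing F] (f : Polynomial (Polynomial F)) : ℕ :=
  f.support.sup fun i => (f.coeff i).natDegree

/-!
Translation by `c` and exchanging the roles of the two variables are ring automorphisms, so they
preserve square-freeness, and by Gauss's lemma a square-free element of `F[x][t]` stays square-free
in `F(x)[t]`. Such a polynomial can fail to be separable only through an irreducible factor `q` with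
`dq/dt = 0`, and then the characteristic `p` is positive and divides `deg_t q`. This is impossible
if `deg_t` of the whole polynomial is below `p`, and substituting `x + c` for `x` raises `deg_t` by
at most `deg_x f * deg c`.
-/

open Polynomial Polynomial.Bivariate

theorem squarefree_map_mulEquiv_iff {M N : Type*} [Monoid M] [Monoid N] (e : M ≃* N) {a : M} :
    Squarefree (e a) ↔ Squarefree a := by
  simp only [Squarefree, e.surjective.forall, ← map_mul, map_dvd_iff, MulEquiv.isUnit_map]

theorem squarefree_comp_X_add_C_iff {R : Type*} [CommRing R] {f : R[X]} (c : R) :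
    Squarefree (f.comp (X + C c)) ↔ Squarefree f := by
  rw [comp_eq_aeval]
  exact squarefree_map_mulEquiv_iff (algEquivAevalXAddC c).toMulEquiv

section GaussLemma

variable {R K : Type*} [CommRing R] [IsDomain R] [IsGCDMonoid R] [Field K] [Algebra R K]
  [IsFractionRing R K]

variable (R) in
theorem exists_isPrimitive_associated_map {q : K[X]} (hq : q ≠ 0) :
    ∃ s : R[X], s.IsPrimitive ∧ Associated (s.map (algebraMap R K)) q := by
  let : NormalizedGCDMonoid R := Nonempty.some inferInstance
  have isUnit_C_algebraMap {a : R} (ha : a ≠ 0) : IsUnit (C (algebraMap R K a)) :=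
    isUnit_C.mpr (IsUnit.mk0 _ ((map_ne_zero_iff _ (IsFractionRing.injective R K)).mpr ha))
  obtain ⟨b, hb, hbq⟩ := IsLocalization.integerNormalization_spec (nonZeroDivisors R) q
  set n := IsLocalization.integerNormalization (nonZeroDivisors R) q
  have hn : n.content ≠ 0 := by
    rwa [Ne, content_eq_zero_iff, IsFractionRing.integerNormalization_eq_zero_iff]
  refine ⟨n.primPart, n.isPrimitive_primPart, ?_⟩
  calc Associated (n.primPart.map (algebraMap R K)) (n.map (algebraMap R K)) := by
        conv_rhs => rw [n.eq_C_content_mul_primPart, Polynomial.map_mul, map_C]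
        exact (associated_isUnit_mul_right_iff (isUnit_C_algebraMap hn)).mpr .rfl
    Associated _ q := by
        rw [hbq, Algebra.smul_def, Polynomial.algebraMap_apply]
        exact associated_unit_mul_left _ _ (isUnit_C_algebraMap (nonZeroDivisors.ne_zero hb))

theorem squarefree_map_algebraMap_fractionRing {h : R[X]} (hh : Squarefree h) :
    Squarefree (h.map (algebraMap R K)) := by
  let : NormalizedGCDMonoid R := Nonempty.some inferInstance
  intro q hq
  have hq0 : q ≠ 0 := by
    rintro rfl
    rw [mul_zero, zero_dvd_iff, Polynomial.map_eq_zero_iff (IsFractionRing.injective R K)] at hq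
    exact hh.ne_zero hq
  obtain ⟨s, hs, hsq⟩ := exists_isPrimitive_associated_map R hq0
  have hss : (s * s).map (algebraMap R K) ∣ h.map (algebraMap R K) := by
    rw [Polynomial.map_mul]
    exact (hsq.mul_mul hsq).dvd.trans hq
  have hsu : IsUnit s := hh s ((hs.mul hs).dvd_of_fraction_map_dvd_fraction_map hss)
  exact hsq.isUnit (hsu.map (mapRingHom (algebraMap R K)))

end GaussLemma

section Separable

theorem natCast_ne_zero_of_lt_ringChar {R : Type*} [NonAssocSemiring R] {n : ℕ} (hn : n ≠ 0)
    (h : ringChar R = 0 ∨ n < ringChar R) : (n : R) ≠ 0 := by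
  rw [Ne, ringChar.spec]
  rcases h with h | h
  · rwa [h, zero_dvd_iff]
  · exact Nat.not_dvd_of_pos_of_lt (Nat.pos_of_ne_zero hn) h

theorem derivative_ne_zero_of_natCast_natDegree_ne_zero {R : Type*} [Semiring R]
    [NoZeroDivisors R] {q : R[X]} (hq : (q.natDegree : R) ≠ 0) : derivative q ≠ 0 := by
  intro h
  have hdeg : q.natDegree ≠ 0 := by
    intro hdeg
    simp [hdeg] at hq
  have hq0 : q ≠ 0 := ne_zero_of_natDegree_gt (Nat.pos_of_ne_zero hdeg)
  have hcoeff : q.leadingCoeff * (q.natDegree : R) = 0 := by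
    obtain ⟨m, hm⟩ := Nat.exists_eq_succ_of_ne_zero hdeg
    simpa [coeff_derivative, leadingCoeff, hm] using congrArg (coeff · m) h
  exact mul_ne_zero (leadingCoeff_ne_zero.mpr hq0) hq hcoeff

variable {K : Type*} [Field K] {g : K[X]}

theorem separable_of_squarefree_of_irreducible_dvd (hg : Squarefree g)
    (h : ∀ q, Irreducible q → q ∣ g → q.Separable) : g.Separable := by
  refine isCoprime_of_irreducible_dvd (fun h0 ↦ hg.ne_zero h0.1) ?_
  rintro q hq ⟨r, rfl⟩ hqd
  have hqr : q ∣ derivative q * r := by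
    rwa [derivative_mul, dvd_add_left (dvd_mul_right q _)] at hqd
  have hsep : IsCoprime q (derivative q) := h q hq (dvd_mul_right q r)
  exact hq.not_isUnit (hg q (mul_dvd_mul_left q (hsep.dvd_of_dvd_mul_left hqr)))

theorem separable_of_squarefree_of_natDegree_lt_ringChar (hg : Squarefree g)
    (hp : ringChar K = 0 ∨ g.natDegree < ringChar K) : g.Separable := by
  refine separable_of_squarefree_of_irreducible_dvd hg fun q hq hqg ↦ ?_
  rw [separable_iff_derivative_ne_zero hq]
  have hdeg : q.natDegree ≤ g.natDegree := natDegree_le_of_dvd hqg hg.ne_zero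
  exact derivative_ne_zero_of_natCast_natDegree_ne_zero
    (natCast_ne_zero_of_lt_ringChar hq.natDegree_pos.ne' (hp.imp_right hdeg.trans_lt))

end Separable

section DegreeInT

variable {R : Type*} [CommRing R]

theorem degTP_le_iff {f : R[X][X]} {n : ℕ} :
    degTP f ≤ n ↔ ∀ i, (f.coeff i).natDegree ≤ n := by
  refine Finset.sup_le_iff.trans (forall_congr' fun i ↦ ⟨fun h ↦ ?_, fun h _ ↦ h⟩)
  by_cases hi : i ∈ f.support
  · exact h hi
  · simp [notMem_support_iff.mp hi]

theorem coeff_coeff_swap (f : R[X][X]) (i j : ℕ) :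
    ((swap f).coeff i).coeff j = (f.coeff j).coeff i := by
  induction f using Polynomial.induction_on' with
  | add f g hf hg => simp only [map_add, coeff_add, hf, hg]
  | monomial n a =>
    simp only [swap_monomial, coeff_mul_C, coeff_map, coeff_C_mul, coeff_X_pow, coeff_monomial]
    split_ifs <;> simp_all

theorem natDegree_swap (f : R[X][X]) : (swap f).natDegree = degTP f := by
  refine eq_of_forall_ge_iff fun n ↦ ?_
  simp only [degTP_le_iff, natDegree_le_iff_coeff_eq_zero, Polynomial.ext_iff, coeff_zero,
    coeff_coeff_swap]
  exact ⟨fun h j m hm ↦ h m hm j, fun h m hm j ↦ h j m hm⟩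

theorem degTP_C (a : R[X]) : degTP (C a) = a.natDegree := by
  rw [← natDegree_swap, swap_C, natDegree_map_eq_of_injective C_injective]

theorem degTP_X_add_C (c : R[X]) : degTP (X + C c) = c.natDegree := by
  rw [← natDegree_swap, map_add, swap_Y, swap_C, natDegree_C_add,
    natDegree_map_eq_of_injective C_injective]

theorem degTP_comp_le (f g : R[X][X]) :
    degTP (f.comp g) ≤ f.natDegree * degTP g + degTP f := by
  rw [← natDegree_swap, comp, eval₂_eq_sum, sum_def, map_sum]
  refine natDegree_sum_le_of_forall_le _ _ fun i hi ↦ ?_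
  calc (swap (C (f.coeff i) * g ^ i)).natDegree
      ≤ (swap (C (f.coeff i))).natDegree + i * (swap g).natDegree := by
        rw [map_mul, map_pow]
        exact natDegree_mul_le_of_le le_rfl natDegree_pow_le
    _ = i * degTP g + (f.coeff i).natDegree := by
        rw [natDegree_swap, natDegree_swap, degTP_C, add_comm]
    _ ≤ f.natDegree * degTP g + degTP f := by
        gcongr
        exacts [le_natDegree_of_mem_supp i hi, degTP_le_iff.mp le_rfl i]

end DegreeInT

section SepT

variable {F : Type*} [Field F] {g : F[X][X]}

theorem sepT_iff_separable_map_swap :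
    sepT g ↔ ((swap g).map (algebraMap F[X] (RatFunc F))).Separable := by
  have heval : eval₂ (mapRingHom (algebraMap F (RatFunc F))) (C RatFunc.X) g =
      (swap g).map (algebraMap F[X] (RatFunc F)) :=
    calc _ = mapAlgHom (aeval RatFunc.X) (swap g) := aveal_eq_map_swap RatFunc.X g
      _ = _ := congrArg (map · (swap g)) (RingHom.ext RatFunc.aeval_X_left_eq_algebraMap)
  rw [sepT, heval]

theorem sepT_of_squarefree (hg : Squarefree g)
    (hp : ringChar F = 0 ∨ degTP g < ringChar F) : sepT g := by
  have hswap : Squarefree (swap g) :=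
    (squarefree_map_mulEquiv_iff (swap : F[X][X] ≃ₐ[F] F[X][X]).toMulEquiv).mpr hg
  have hdeg : ((swap g).map (algebraMap F[X] (RatFunc F))).natDegree ≤ degTP g :=
    natDegree_map_le.trans (natDegree_swap g).le
  rw [sepT_iff_separable_map_swap]
  refine separable_of_squarefree_of_natDegree_lt_ringChar
    (squarefree_map_algebraMap_fractionRing hswap) ?_
  rw [← Algebra.ringChar_eq F (RatFunc F)]
  exact hp.imp_right hdeg.trans_lt

end SepT

/-- Let `F` be a field of characteristic `p` (possibly `0`),
`f ∈ F[t][x]` square-free, and `c ∈ F[t]`. If `p = 0` or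
`p > deg_x f · deg c + deg_t f`, then `f(t, x + c(t))` is separable in `t`. -/
theorem comp_shift_sepT (F : Type*) [Field F]
    (f : Polynomial (Polynomial F)) (hf : Squarefree f) (c : Polynomial F)
    (hp : ringChar F = 0 ∨ f.natDegree * c.natDegree + degTP f < ringChar F) :
    sepT (f.comp (Polynomial.X + Polynomial.C c)) := by
  have hdeg : degTP (f.comp (X + C c)) ≤ f.natDegree * c.natDegree + degTP f := by
    rw [← degTP_X_add_C c]
    exact degTP_comp_le f (X + C c)
  exact sepT_of_squarefree ((squarefree_comp_X_add_C_iff c).mpr hf) (hp.imp_right hdeg.trans_lt)
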